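/- Consider a linear system, i.e., f(ξ) = Aξ and h(ξ) = Cξ with A ∈ ℝ^{n×n} and C ∈ ℝ^{p×n}, and fix k ≥ 3. Suppose x̂_K: [0,T] → ℝⁿ and Σ: [0,T] → ℝ^{n×n} are differentiable, Σ(t) is invertible for all t, and they satisfy the Kalman filter equations x̂_K′(t) = A x̂_K(t) + Σ(t) Cᵀ Q ( y(t) − C x̂_K(t) ), x̂_K(0) = x₀, and Σ′(t) = A Σ(t) + Σ(t) Aᵀ − Σ(t) Cᵀ Q C Σ(t) + G R⁻¹ Gᵀ, Σ(0) = Γ⁻¹. Then x̂ := x̂_K, P₂ := Σ⁻¹, and P_j := 0 for 3 ≤ j ≤ k satisfy the higher order extended Kalman filter system: x̂′(t) = f(x̂(t)) + P₂(t)⁻¹ J_h(x̂(t))ᵀ Q (y(t) − h(x̂(t))); P₂′(t) = −J_f(x̂(t))ᵀ P₂(t) − P₂(t) J_f(x̂(t)) − P₂(t) G R⁻¹ Gᵀ P₂(t) − R₂(t) − P₃(t) *_{1,1} ( P₂(t)⁻¹ J_h(x̂(t))ᵀ Q (y(t) − h(x̂(t))) ); for 3 ≤ j ≤ k−1: P_j′(t)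 = −Σ_{i=1}^{j} P_j(t) ×_i ( J_f(x̂(t)) + G R⁻¹ Gᵀ P₂(t) ) − R_j(t) − P_{j+1}(t) *_{1,1} ( P₂(t)⁻¹ J_h(x̂(t))ᵀ Q (y(t) − h(x̂(t))) ); P_k′(t) = −Σ_{i=1}^{k} P_k(t) ×_i ( J_f(x̂(t)) + G R⁻¹ Gᵀ P₂(t) ) − R_k(t); with x̂(0) = x₀, P₂(0) = Γ and P_j(0) = 0 for 3 ≤ j ≤ k, where for 2 ≤ ℓ ≤ k: R_ℓ(t) = Σ_{i=1}^{ℓ−2} Sym_{i,ℓ−i}( P_{i+1}(t) *_{1,1} D^{ℓ−i} f(x̂(t)) ) + ½ Σ_{i=2}^{ℓ−2} Sym_{i,ℓ−i}( P_{i+1}(t) *_{1,1} ( G R⁻¹ Gᵀ *_{2,1} P_{ℓ−i+1}(t) ) ) + D^ℓ h(x̂(t)) *_{1,1} ( Q (y(t) − h(x̂(t))) ) − ½ Σ_{i=1}^{ℓ−1} Sym_{i,ℓ−i}( D^i h(x̂(t)) *_{1,1} ( Q *_{2,1} D^{ℓ−i} h(x̂(t)) ) ). -/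

import Mathlib

open scoped BigOperators
open Matrix

/-- The set `S_{i,j}` of `(i,j)`-shuffles, realized as the permutations of `Fin k`
(with `k = i + j`) that are strictly increasing on the first `i` positions and on the
remaining positions. -/
def shuffles (k i : ℕ) : Finset (Equiv.Perm (Fin k)) :=
  Finset.univ.filter fun σ =>
    (∀ a b : Fin k, a < b → (b : ℕ) < i → σ a < σ b) ∧
    (∀ a b : Fin k, a < b → i ≤ (a : ℕ) → σ a < σ b)

/-- Entry of the order-`k` spatial derivative tensor of `u : ℝⁿ → ℝ` at `ξ`. -/
noncomputable def Dt (n k : ℕ) (u : (Fin n → ℝ) → ℝ) (ξ : Fin n → ℝ)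
    (idx : Fin k → Fin n) : ℝ :=
  iteratedFDeriv ℝ k u ξ fun r => Pi.single (idx r) 1

/-- Inclusion of the first block `{0, …, i-1}` into `Fin k`. -/
def finL {k : ℕ} (i : ℕ) (h : i ≤ k) (r : Fin i) : Fin k := Fin.castLE h r

/-- Inclusion of the second block into `Fin k`, shifting by `i`. -/
def finR {k : ℕ} (i : ℕ) {l : ℕ} (h : i + l = k) (r : Fin l) : Fin k :=
  ⟨i + r.1, by have := r.2; omega⟩

/-- The tensor `R_ℓ(t)` of the higher order extended Kalman filter, for a family `P`
of tensors (`P j` of order `j`), stated entrywise. -/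
noncomputable def RTen {n m p : ℕ} (G : Matrix (Fin n) (Fin m) ℝ)
    (R : Matrix (Fin m) (Fin m) ℝ) (Q : Matrix (Fin p) (Fin p) ℝ)
    (f : (Fin n → ℝ) → Fin n → ℝ) (h : (Fin n → ℝ) → Fin p → ℝ)
    (yt : Fin p → ℝ) (P : (j : ℕ) → (Fin j → Fin n) → ℝ)
    (xt : Fin n → ℝ) (l : ℕ) (idx : Fin l → Fin n) : ℝ :=
  (∑ i : Fin (l - 2), ∑ σ ∈ shuffles l ((i : ℕ) + 1), ∑ s : Fin n,
      P ((i : ℕ) + 2)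
          (Fin.cons s fun r : Fin ((i : ℕ) + 1) =>
            idx (σ (finL ((i : ℕ) + 1) (by have := i.isLt; omega) r))) *
        Dt n (l - ((i : ℕ) + 1)) (fun x => f x s) xt
          (fun r => idx (σ (finR ((i : ℕ) + 1) (by have := i.isLt; omega) r)))) +
    (1 / 2) *
      (∑ i : Fin (l - 3), ∑ σ ∈ shuffles l ((i : ℕ) + 2), ∑ s : Fin n, ∑ r : Fin n,
        P ((i : ℕ) + 3)
            (Fin.cons s fun a : Fin ((i : ℕ) + 2) =>
              idx (σ (finL ((i : ℕ) + 2) (by have := i.isLt; omega) a))) *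
          (G * R⁻¹ * Gᵀ) s r *
          P (l - ((i : ℕ) + 2) + 1)
            (Fin.cons r fun a : Fin (l - ((i : ℕ) + 2)) =>
              idx (σ (finR ((i : ℕ) + 2) (by have := i.isLt; omega) a)))) +
    (∑ s : Fin p, Dt n l (fun x => h x s) xt idx * Q.mulVec (yt - h xt) s) -
    (1 / 2) *
      (∑ i : Fin (l - 1), ∑ σ ∈ shuffles l ((i : ℕ) + 1), ∑ s : Fin p, ∑ r : Fin p,
        Dt n ((i : ℕ) + 1) (fun x => h x s) xt
            (fun a => idx (σ (finL ((i : ℕ) + 1) (by have := i.isLt; omega) a))) *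
          Q s r *
          Dt n (l - ((i : ℕ) + 1)) (fun x => h x r) xt
            (fun a => idx (σ (finR ((i : ℕ) + 1) (by have := i.isLt; omega) a))))

/-- The family of tensors `P_j` induced by the Kalman filter covariance `Σ`:
`P₂ = Σ⁻¹` (as an order-2 tensor) and `P_j = 0` for `j ≠ 2`. -/
noncomputable def kalmanP (n : ℕ) (Sig : ℝ → Matrix (Fin n) (Fin n) ℝ) (t : ℝ)
    (j : ℕ) (idx : Fin j → Fin n) : ℝ :=
  if hj : j = 2 then (Sig t)⁻¹ (idx ⟨0, by omega⟩) (idx ⟨1, by omega⟩) else 0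

/-!
Differentiating `S * S⁻¹ = 1` gives `(S⁻¹)' = -S⁻¹ S' S⁻¹`, which turns the Riccati equation for the
covariance `Σ` into the one for the information matrix `P₂ = Σ⁻¹`. For linear `f` and `h` all
derivative tensors of order at least two vanish, so `R₂ = -Cᵀ Q C`: the two `(1,1)`-shuffles
contribute `Cᵀ Q C` and its transpose, and `Q` is symmetric. For `ℓ ≥ 3` every summand of `R_ℓ`
contains a derivative of order at least two or a tensor `P_j` with `j ≥ 3`, so `P_j = 0` is
consistent with the higher order equations.
-/

section MatrixInverse

variable {𝕜 ι κ α : Type*}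

theorem hasDerivAt_matrix_iff [NontriviallyNormedField 𝕜] [Finite κ]
    {S : 𝕜 → Matrix ι κ 𝕜} {S' : Matrix ι κ 𝕜} {t : 𝕜} :
    HasDerivAt S S' t ↔ ∀ a b, HasDerivAt (fun s => S s a b) (S' a b) t := by
  have := Fintype.ofFinite κ
  exact hasDerivAt_pi.trans (forall_congr' fun _ => hasDerivAt_pi)

variable [Fintype ι] [DecidableEq ι]

open scoped Matrix.Norms.Operator in
theorem hasDerivAt_matrix_inv [NontriviallyNormedField 𝕜] [CompleteSpace 𝕜]
    {S : 𝕜 → Matrix ι ι 𝕜} {S' : Matrix ι ι 𝕜} {t : 𝕜}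
    (hS : HasDerivAt S S' t) (hSt : IsUnit (S t)) :
    HasDerivAt (fun s => (S s)⁻¹) (-((S t)⁻¹ * S' * (S t)⁻¹)) t := by
  -- Plain `CompleteSpace` would refer to the entrywise uniformity, not to that of the norm.
  have : @CompleteSpace (Matrix ι ι 𝕜) PseudoMetricSpace.toUniformSpace :=
    FiniteDimensional.complete 𝕜 _
  have hinv : HasFDerivAt (fun M : Matrix ι ι 𝕜 => M⁻¹)
      (-ContinuousLinearMap.mulLeftRight 𝕜 (Matrix ι ι 𝕜) (S t)⁻¹ (S t)⁻¹) (S t) := by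
    obtain ⟨u, hu⟩ := hSt
    simpa only [← hu, ← Matrix.coe_units_inv, Matrix.nonsing_inv_eq_ringInverse,
      Ring.inverse_unit] using hasFDerivAt_ringInverse (𝕜 := 𝕜) u
  exact hinv.comp_hasDerivAt t hS

theorem inv_mul_riccati_mul_inv [CommRing α] {S : Matrix ι ι α} (hS : IsUnit S)
    (A B M W : Matrix ι ι α) :
    S⁻¹ * (A * S + S * B - S * M * S + W) * S⁻¹ = S⁻¹ * A + B * S⁻¹ - M + S⁻¹ * W * S⁻¹ := by
  have hdet := (Matrix.isUnit_iff_isUnit_det S).1 hS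
  simp only [mul_add, mul_sub, add_mul, sub_mul, Matrix.mul_assoc, Matrix.mul_nonsing_inv S hdet,
    Matrix.nonsing_inv_mul_cancel_left _ _ hdet, Matrix.mul_one]

theorem hasDerivAt_inv_of_riccati [NontriviallyNormedField 𝕜] [CompleteSpace 𝕜]
    {S : 𝕜 → Matrix ι ι 𝕜} {A B M W : Matrix ι ι 𝕜} {t : 𝕜} (hSt : IsUnit (S t))
    (hS : HasDerivAt S (A * S t + S t * B - S t * M * S t + W) t) :
    HasDerivAt (fun s => (S s)⁻¹)
      (-B * (S t)⁻¹ - (S t)⁻¹ * A - (S t)⁻¹ * W * (S t)⁻¹ + M) t := by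
  convert hasDerivAt_matrix_inv hS hSt using 1
  rw [inv_mul_riccati_mul_inv hSt, neg_mul]
  abel

end MatrixInverse

section DerivativeTensors

theorem iteratedFDeriv_continuousLinearMap_of_two_le {𝕜 E F : Type*} [NontriviallyNormedField 𝕜]
    [NormedAddCommGroup E] [NormedSpace 𝕜 E] [NormedAddCommGroup F] [NormedSpace 𝕜 F]
    {l : ℕ} (hl : 2 ≤ l) (L : E →L[𝕜] F) : iteratedFDeriv 𝕜 l L = 0 := by
  obtain ⟨l, rfl⟩ := Nat.exists_eq_add_of_le' hl
  ext x v
  have hconst : fderiv 𝕜 L = fun _ => L := funext fun _ => L.fderiv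
  rw [iteratedFDeriv_succ_apply_right, hconst, iteratedFDeriv_succ_const]
  rfl

variable {n q : ℕ} (B : Matrix (Fin q) (Fin n) ℝ) (s : Fin q) (ξ : Fin n → ℝ)

/-- The coordinate `x ↦ (B x)ₛ` of a matrix map, bundled as a continuous linear functional so that
the calculus library applies to it. -/
noncomputable def mulVecCoord : (Fin n → ℝ) →L[ℝ] ℝ :=
  (LinearMap.proj s ∘ₗ B.mulVecLin).toContinuousLinearMap

theorem mulVecCoord_apply (x : Fin n → ℝ) : mulVecCoord B s x = (B *ᵥ x) s :=
  rfl

theorem Dt_mulVec_of_two_le {l : ℕ} (hl : 2 ≤ l) (idx : Fin l → Fin n) :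
    Dt n l (fun x => (B *ᵥ x) s) ξ idx = 0 := by
  simp only [Dt, ← mulVecCoord_apply, iteratedFDeriv_continuousLinearMap_of_two_le hl,
    Pi.zero_apply, _root_.zero_apply]

theorem Dt_mulVec_one (idx : Fin 1 → Fin n) :
    Dt n 1 (fun x => (B *ᵥ x) s) ξ idx = B s (idx 0) := by
  simp only [Dt, iteratedFDeriv_one_apply, ← mulVecCoord_apply, ContinuousLinearMap.fderiv]
  simp [mulVecCoord_apply]

end DerivativeTensors

theorem shuffles_two_one : shuffles 2 1 = {1, Equiv.swap 0 1} := by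
  decide

theorem isSymm_transpose_mul_mul {α ι κ : Type*} [CommSemiring α] [Fintype ι]
    {Q : Matrix ι ι α} (hQ : Q.IsSymm) (J : Matrix ι κ α) : (Jᵀ * Q * J).IsSymm := by
  rw [Matrix.IsSymm, Matrix.transpose_mul, Matrix.transpose_mul, Matrix.transpose_transpose, hQ.eq,
    Matrix.mul_assoc]

section RemainderTensor

variable {n m p : ℕ} {G : Matrix (Fin n) (Fin m) ℝ} {R : Matrix (Fin m) (Fin m) ℝ}
  {Q : Matrix (Fin p) (Fin p) ℝ} {f : (Fin n → ℝ) → Fin n → ℝ} {h : (Fin n → ℝ) → Fin p → ℝ}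
  {yt : Fin p → ℝ} {P : (j : ℕ) → (Fin j → Fin n) → ℝ} {xt : Fin n → ℝ}

theorem RTen_eq_zero_of_three_le
    (hf : ∀ i, 2 ≤ i → ∀ s idx, Dt n i (fun x => f x s) xt idx = 0)
    (hh : ∀ i, 2 ≤ i → ∀ s idx, Dt n i (fun x => h x s) xt idx = 0)
    (hP : ∀ j, 3 ≤ j → ∀ idx, P j idx = 0) {l : ℕ} (hl : 3 ≤ l) (idx : Fin l → Fin n) :
    RTen G R Q f h yt P xt l idx = 0 := by
  have hDf (i : Fin (l - 2)) := hf (l - (i + 1)) (by omega)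
  have hP_succ (i : Fin (l - 3)) := hP (i + 3) (by omega)
  have hDh_mul_Dh (i : Fin (l - 1)) (s r : Fin p) (v : Fin (i + 1) → Fin n)
      (w : Fin (l - (i + 1)) → Fin n) :
      Dt n (i + 1) (fun x => h x s) xt v * Q s r *
        Dt n (l - (i + 1)) (fun x => h x r) xt w = 0 := by
    rcases Nat.lt_or_ge (i + 1 : ℕ) 2 with hi | hi
    · rw [hh (l - (i + 1)) (by omega), mul_zero]
    · rw [hh (i + 1) hi, zero_mul, zero_mul]
  simp only [RTen, hDf, hP_succ, hDh_mul_Dh, hh l (by omega), zero_mul, mul_zero,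
    Finset.sum_const_zero, add_zero, sub_zero]

theorem RTen_two {J : Matrix (Fin p) (Fin n) ℝ}
    (hJ : ∀ s idx, Dt n 1 (fun x => h x s) xt idx = J s (idx 0)) (a b : Fin n) :
    RTen G R Q f h yt P xt 2 ![a, b] =
      ∑ s, Dt n 2 (fun x => h x s) xt ![a, b] * (Q *ᵥ (yt - h xt)) s -
        1 / 2 * ((Jᵀ * Q * J) a b + (Jᵀ * Q * J) b a) := by
  have hentry (u v : Fin n) : ∑ s, ∑ r, J s u * Q s r * J r v = (Jᵀ * Q * J) u v := by
    simp only [Matrix.mul_apply, Matrix.transpose_apply, Finset.sum_mul]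
    exact Finset.sum_comm
  have hshuffle : ∑ σ ∈ shuffles 2 1, (Jᵀ * Q * J) (![a, b] (σ 0)) (![a, b] (σ 1)) =
      (Jᵀ * Q * J) a b + (Jᵀ * Q * J) b a := by
    rw [shuffles_two_one, Finset.sum_pair (by decide)]
    simp
  -- The sums of `R₂` are indexed by `Fin (2 - 2)`, `Fin (2 - 3)` and `Fin (2 - 1)`.
  change (∑ i : Fin 0, _) + 1 / 2 * (∑ i : Fin 0, _) + _ - 1 / 2 * (∑ i : Fin 1, _) = _
  simp only [Fin.sum_univ_zero, Fin.sum_univ_one, mul_zero, zero_add]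
  rw [← hshuffle]
  simp only [← hentry]
  congr! 6 with σ _ s _ r _
  exacts [congrArg (· * Q s r) (hJ s _), hJ r _]

theorem RTen_two_of_Dt_two_eq_zero (hQ : Q.IsSymm) {J : Matrix (Fin p) (Fin n) ℝ}
    (hJ : ∀ s idx, Dt n 1 (fun x => h x s) xt idx = J s (idx 0))
    (hh : ∀ s idx, Dt n 2 (fun x => h x s) xt idx = 0) (a b : Fin n) :
    RTen G R Q f h yt P xt 2 ![a, b] = -(Jᵀ * Q * J) a b := by
  have hsymm : (Jᵀ * Q * J) b a = (Jᵀ * Q * J) a b := (isSymm_transpose_mul_mul hQ J).apply a b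
  simp only [RTen_two hJ, hh, zero_mul, Finset.sum_const_zero, hsymm]
  ring

end RemainderTensor

section KalmanTensors

variable {n : ℕ} {Sig : ℝ → Matrix (Fin n) (Fin n) ℝ} {t : ℝ}

theorem kalmanP_of_ne_two {j : ℕ} (hj : j ≠ 2) (idx : Fin j → Fin n) :
    kalmanP n Sig t j idx = 0 :=
  dif_neg hj

variable {m p : ℕ} {G : Matrix (Fin n) (Fin m) ℝ} {R : Matrix (Fin m) (Fin m) ℝ}
  {Q : Matrix (Fin p) (Fin p) ℝ} {A : Matrix (Fin n) (Fin n) ℝ} {C : Matrix (Fin p) (Fin n) ℝ}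
  {yt : Fin p → ℝ} {xt : Fin n → ℝ}

theorem RTen_kalmanP_two (hQ : Q.IsSymm) (a b : Fin n) :
    RTen G R Q (fun ξ => A *ᵥ ξ) (fun ξ => C *ᵥ ξ) yt (kalmanP n Sig t) xt 2 ![a, b] =
      -(Cᵀ * Q * C) a b :=
  RTen_two_of_Dt_two_eq_zero hQ (fun s => Dt_mulVec_one C s xt)
    (fun s => Dt_mulVec_of_two_le C s xt le_rfl) a b

theorem RTen_kalmanP_of_three_le {j : ℕ} (hj : 3 ≤ j) (idx : Fin j → Fin n) :
    RTen G R Q (fun ξ => A *ᵥ ξ) (fun ξ => C *ᵥ ξ) yt (kalmanP n Sig t) xt j idx = 0 :=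
  RTen_eq_zero_of_three_le (fun _ hi s => Dt_mulVec_of_two_le A s xt hi)
    (fun _ hi s => Dt_mulVec_of_two_le C s xt hi)
    (fun _ hi => kalmanP_of_ne_two (by omega)) hj idx

end KalmanTensors

theorem kalman_solves_hoekf_general {n m p k : ℕ} (hk : 3 ≤ k) {T : ℝ} (hT : 0 ≤ T)
    {G : Matrix (Fin n) (Fin m) ℝ} {R : Matrix (Fin m) (Fin m) ℝ} (_hR : IsUnit R)
    {Q : Matrix (Fin p) (Fin p) ℝ} (hQ : Q.IsSymm) {Γ : Matrix (Fin n) (Fin n) ℝ}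
    {x₀ : Fin n → ℝ} {y : ℝ → Fin p → ℝ}
    {A : Matrix (Fin n) (Fin n) ℝ} {C : Matrix (Fin p) (Fin n) ℝ}
    {xhK : ℝ → Fin n → ℝ} {Sig : ℝ → Matrix (Fin n) (Fin n) ℝ}
    (hSinv : ∀ t ∈ Set.Icc (0 : ℝ) T, IsUnit (Sig t))
    (hxK : ∀ t ∈ Set.Icc (0 : ℝ) T,
      HasDerivAt xhK (A *ᵥ xhK t + Sig t *ᵥ Cᵀ *ᵥ Q *ᵥ (y t - C *ᵥ xhK t)) t)
    (hxK0 : xhK 0 = x₀)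
    (hS : ∀ t ∈ Set.Icc (0 : ℝ) T, ∀ a b : Fin n,
      HasDerivAt (fun s => Sig s a b)
        ((A * Sig t + Sig t * Aᵀ - Sig t * Cᵀ * Q * C * Sig t + G * R⁻¹ * Gᵀ) a b) t)
    (hS0 : Sig 0 = Γ⁻¹) :
    (∀ t ∈ Set.Icc (0 : ℝ) T,
      HasDerivAt xhK (A *ᵥ xhK t + (Sig t)⁻¹⁻¹ *ᵥ Cᵀ *ᵥ Q *ᵥ (y t - C *ᵥ xhK t)) t) ∧
    (∀ t ∈ Set.Icc (0 : ℝ) T, ∀ a b : Fin n,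
      HasDerivAt (fun s => (Sig s)⁻¹ a b)
        ((-Aᵀ * (Sig t)⁻¹ - (Sig t)⁻¹ * A - (Sig t)⁻¹ * (G * R⁻¹ * Gᵀ) * (Sig t)⁻¹ -
            Matrix.of (fun a' b' =>
              RTen G R Q (fun ξ => A *ᵥ ξ) (fun ξ => C *ᵥ ξ) (y t) (kalmanP n Sig t) (xhK t) 2
                ![a', b']) -
            Matrix.of (fun a' b' => ∑ s, kalmanP n Sig t 3 ![s, a', b'] *
              ((Sig t)⁻¹⁻¹ *ᵥ Cᵀ *ᵥ Q *ᵥ (y t - C *ᵥ xhK t)) s)) a b) t) ∧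
    (∀ j : ℕ, 3 ≤ j → j ≤ k - 1 → ∀ t ∈ Set.Icc (0 : ℝ) T, ∀ idx : Fin j → Fin n,
      HasDerivAt (fun s => kalmanP n Sig s j idx)
        (-(∑ i, ∑ kv, kalmanP n Sig t j (Function.update idx i kv) *
              (A + G * R⁻¹ * Gᵀ * (Sig t)⁻¹) kv (idx i)) -
          RTen G R Q (fun ξ => A *ᵥ ξ) (fun ξ => C *ᵥ ξ) (y t) (kalmanP n Sig t) (xhK t) j idx -
          ∑ s, kalmanP n Sig t (j + 1) (Fin.cons s idx) *
            ((Sig t)⁻¹⁻¹ *ᵥ Cᵀ *ᵥ Q *ᵥ (y t - C *ᵥ xhK t)) s) t) ∧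
    (∀ t ∈ Set.Icc (0 : ℝ) T, ∀ idx : Fin k → Fin n,
      HasDerivAt (fun s => kalmanP n Sig s k idx)
        (-(∑ i, ∑ kv, kalmanP n Sig t k (Function.update idx i kv) *
              (A + G * R⁻¹ * Gᵀ * (Sig t)⁻¹) kv (idx i)) -
          RTen G R Q (fun ξ => A *ᵥ ξ) (fun ξ => C *ᵥ ξ) (y t) (kalmanP n Sig t) (xhK t) k idx)
        t) ∧
    xhK 0 = x₀ ∧
    (Sig 0)⁻¹ = Γ ∧
    (∀ j : ℕ, 3 ≤ j → j ≤ k → ∀ idx : Fin j → Fin n, kalmanP n Sig 0 j idx = 0) := by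
  have hP {t : ℝ} {j : ℕ} (hj : 3 ≤ j) (idx : Fin j → Fin n) : kalmanP n Sig t j idx = 0 :=
    kalmanP_of_ne_two (by omega) idx
  refine ⟨fun t ht => ?observer, fun t ht => hasDerivAt_matrix_iff.1 ?riccati,
    fun j hj _ t _ idx => ?lyapunov, fun t _ idx => ?terminal, hxK0, ?initial, fun _ hj _ => hP hj⟩
  case observer =>
    rw [Matrix.nonsing_inv_nonsing_inv _ ((Matrix.isUnit_iff_isUnit_det _).1 (hSinv t ht))]
    exact hxK t ht
  case riccati =>
    have hSig : HasDerivAt Sig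
        (A * Sig t + Sig t * Aᵀ - Sig t * (Cᵀ * Q * C) * Sig t + G * R⁻¹ * Gᵀ) t := by
      simpa only [Matrix.mul_assoc] using hasDerivAt_matrix_iff.2 (hS t ht)
    convert hasDerivAt_inv_of_riccati (hSinv t ht) hSig using 1
    ext a b
    simp [RTen_kalmanP_two hQ, hP le_rfl]
  case lyapunov =>
    simpa [RTen_kalmanP_of_three_le hj, hP hj, hP (hj.trans j.le_succ)]
      using hasDerivAt_const t (0 : ℝ)
  case terminal =>
    simpa [RTen_kalmanP_of_three_le hk, hP hk] using hasDerivAt_const t (0 : ℝ)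
  case initial =>
    have hΓ : IsUnit Γ :=
      Matrix.isUnit_nonsing_inv_iff.1 (hS0 ▸ hSinv 0 (Set.left_mem_Icc.2 hT))
    rw [hS0, Matrix.nonsing_inv_nonsing_inv _ ((Matrix.isUnit_iff_isUnit_det _).1 hΓ)]

/-- for linear systems, the Kalman filter solves the higher order
extended Kalman filter system of any order `k ≥ 3`, with `P₂ = Σ⁻¹` and `P_j = 0` for
`j ≥ 3`. -/
theorem kalman_solves_hoekf {n m p k : ℕ} (hk : 3 ≤ k) (T : ℝ) (hT : 0 < T)
    (G : Matrix (Fin n) (Fin m) ℝ)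
    (R : Matrix (Fin m) (Fin m) ℝ) (hR : R.PosDef)
    (Q : Matrix (Fin p) (Fin p) ℝ) (hQ : Q.PosDef)
    (Γ : Matrix (Fin n) (Fin n) ℝ) (hΓ : Γ.PosDef)
    (x₀ : Fin n → ℝ) (y : ℝ → Fin p → ℝ)
    (A : Matrix (Fin n) (Fin n) ℝ) (C : Matrix (Fin p) (Fin n) ℝ)
    (xhK : ℝ → Fin n → ℝ) (Sig : ℝ → Matrix (Fin n) (Fin n) ℝ)
    (hSinv : ∀ t ∈ Set.Icc (0 : ℝ) T, IsUnit (Sig t))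
    (hxK : ∀ t ∈ Set.Icc (0 : ℝ) T,
      HasDerivAt xhK
        (A.mulVec (xhK t) +
          (Sig t).mulVec (Cᵀ.mulVec (Q.mulVec (y t - C.mulVec (xhK t))))) t)
    (hxK0 : xhK 0 = x₀)
    (hS : ∀ t ∈ Set.Icc (0 : ℝ) T, ∀ a b : Fin n,
      HasDerivAt (fun s => Sig s a b)
        ((A * Sig t + Sig t * Aᵀ - Sig t * Cᵀ * Q * C * Sig t + G * R⁻¹ * Gᵀ) a b) t)
    (hS0 : Sig 0 = Γ⁻¹) :
    -- the observer equation of the HOEKF, with P₂ = Σ⁻¹, J_h = C, h(ξ) = Cξ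
    (∀ t ∈ Set.Icc (0 : ℝ) T,
      HasDerivAt xhK
        (A.mulVec (xhK t) +
          ((Sig t)⁻¹)⁻¹.mulVec (Cᵀ.mulVec (Q.mulVec (y t - C.mulVec (xhK t))))) t) ∧
    -- the Riccati-type equation for P₂ = Σ⁻¹
    (∀ t ∈ Set.Icc (0 : ℝ) T, ∀ a b : Fin n,
      HasDerivAt (fun s => (Sig s)⁻¹ a b)
        ((-Aᵀ * (Sig t)⁻¹ - (Sig t)⁻¹ * A -
            (Sig t)⁻¹ * (G * R⁻¹ * Gᵀ) * (Sig t)⁻¹ -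
            Matrix.of (fun a' b' : Fin n =>
              RTen G R Q (fun ξ => A.mulVec ξ) (fun ξ => C.mulVec ξ) (y t)
                (kalmanP n Sig t) (xhK t) 2 ![a', b']) -
            Matrix.of (fun a' b' : Fin n =>
              ∑ s : Fin n,
                kalmanP n Sig t 3 ![s, a', b'] *
                  (((Sig t)⁻¹)⁻¹.mulVec
                    (Cᵀ.mulVec (Q.mulVec (y t - C.mulVec (xhK t))))) s)) a b) t) ∧
    -- the generalized differential Lyapunov equations for P_j = 0, 3 ≤ j ≤ k−1
    (∀ j : ℕ, 3 ≤ j → j ≤ k - 1 → ∀ t ∈ Set.Icc (0 : ℝ) T, ∀ idx : Fin j → Fin n,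
      HasDerivAt (fun s => kalmanP n Sig s j idx)
        (-(∑ i : Fin j, ∑ kv : Fin n,
              kalmanP n Sig t j (Function.update idx i kv) *
                (A + G * R⁻¹ * Gᵀ * (Sig t)⁻¹) kv (idx i)) -
          RTen G R Q (fun ξ => A.mulVec ξ) (fun ξ => C.mulVec ξ) (y t)
            (kalmanP n Sig t) (xhK t) j idx -
          ∑ s : Fin n,
            kalmanP n Sig t (j + 1) (Fin.cons s idx) *
              (((Sig t)⁻¹)⁻¹.mulVec
                (Cᵀ.mulVec (Q.mulVec (y t - C.mulVec (xhK t))))) s) t) ∧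
    -- the terminal generalized differential Lyapunov equation for P_k = 0
    (∀ t ∈ Set.Icc (0 : ℝ) T, ∀ idx : Fin k → Fin n,
      HasDerivAt (fun s => kalmanP n Sig s k idx)
        (-(∑ i : Fin k, ∑ kv : Fin n,
              kalmanP n Sig t k (Function.update idx i kv) *
                (A + G * R⁻¹ * Gᵀ * (Sig t)⁻¹) kv (idx i)) -
          RTen G R Q (fun ξ => A.mulVec ξ) (fun ξ => C.mulVec ξ) (y t)
            (kalmanP n Sig t) (xhK t) k idx) t) ∧
    -- initial conditions
    xhK 0 = x₀ ∧
    (Sig 0)⁻¹ = Γ ∧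
    (∀ j : ℕ, 3 ≤ j → j ≤ k → ∀ idx : Fin j → Fin n,
      kalmanP n Sig 0 j idx = 0) := by
  exact kalman_solves_hoekf_general hk hT.le hR.isUnit (isHermitian_iff_isSymm.1 hQ.isHermitian)
    hSinv hxK hxK0 hS hS0
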